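/- arXiv:2104.05907 — 5 statements merged into one kernel-verified Lean document; each statement's English description precedes it below -/
import Mathlib

section
/- For every positive integer k, the k-th Burling graph G'_k is isomorphic to an induced subgraph of G_k; in fact G'_k is isomorphic to G_k ∖ T_k. -/
universe u

/-- A *wheel* is a graph consisting of an induced cycle of length at least 4 together with a
single additional vertex (the hub) having at least 3 neighbours on the cycle. -/
def IsWheel {V : Type u} (G : SimpleGraph V) : Prop :=
  ∃ (w : V) (n : ℕ), 4 ≤ n ∧
    Nonempty (G.induce {u | u ≠ w} ≃g SimpleGraph.cycleGraph n) ∧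
    3 ≤ (G.neighborSet w).ncard

/-- A graph is a *fan with pivot `f`* if deleting `f` leaves an induced path and `f` has at
least 3 neighbours (necessarily on that path). -/
def IsFanWithPivot {V : Type u} (G : SimpleGraph V) (f : V) : Prop :=
  (∃ n : ℕ, Nonempty (G.induce {u | u ≠ f} ≃g SimpleGraph.pathGraph n)) ∧
    3 ≤ (G.neighborSet f).ncard

/-- A *fan* is a graph consisting of an induced path and a single additional vertex (the pivot)
with at least 3 neighbours on the path. -/
def IsFan {V : Type u} (G : SimpleGraph V) : Prop :=
  ∃ f : V, IsFanWithPivot G f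

/-- A *guarded fan* is a graft `(F, M)` such that `F` is a fan with pivot `f` and both
endpoints of the path `F \ {f}` lie in `M`. -/
def IsGuardedFan {V : Type u} (G : SimpleGraph V) (M : Set V) : Prop :=
  ∃ (f : V) (n : ℕ) (e : G.induce {u | u ≠ f} ≃g SimpleGraph.pathGraph (n + 1)),
    3 ≤ (G.neighborSet f).ncard ∧
    ((e.symm 0 : {u // u ≠ f}) : V) ∈ M ∧ ((e.symm (Fin.last n) : {u // u ≠ f}) : V) ∈ M

/-- A *mountable path* is a graft `(P, M)` such that `P` is a path and `|M| ≥ 3`. -/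
def IsMountablePath {V : Type u} (G : SimpleGraph V) (M : Set V) : Prop :=
  (∃ n : ℕ, Nonempty (G ≃g SimpleGraph.pathGraph n)) ∧ 3 ≤ M.ncard

/-- A *theta* is a graph consisting of three internally vertex-disjoint paths of length at
least 2 with common endpoints, such that every edge lies on one of the three paths. -/
def IsTheta {V : Type u} (G : SimpleGraph V) : Prop :=
  ∃ (a b : V) (p₁ p₂ p₃ : G.Walk a b),
    a ≠ b ∧ p₁.IsPath ∧ p₂.IsPath ∧ p₃.IsPath ∧
    2 ≤ p₁.length ∧ 2 ≤ p₂.length ∧ 2 ≤ p₃.length ∧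
    (∀ v, v ∈ p₁.support → v ∈ p₂.support → v = a ∨ v = b) ∧
    (∀ v, v ∈ p₁.support → v ∈ p₃.support → v = a ∨ v = b) ∧
    (∀ v, v ∈ p₂.support → v ∈ p₃.support → v = a ∨ v = b) ∧
    (∀ v : V, v ∈ p₁.support ∨ v ∈ p₂.support ∨ v ∈ p₃.support) ∧
    (∀ e ∈ G.edgeSet, e ∈ p₁.edges ∨ e ∈ p₂.edges ∨ e ∈ p₃.edges)

/-- A graft `(G, T)` is *clean* if (1) `G` is triangle-free, (2) `T` is a stable set,
(3) `G` contains no induced wheel, (4) `(G,T)` contains no induced guarded fan, and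
(5) `(G,T)` contains no induced mountable path. -/
def IsCleanGraft {V : Type u} (G : SimpleGraph V) (T : Set V) : Prop :=
  G.CliqueFree 3 ∧
  (∀ u ∈ T, ∀ v ∈ T, ¬ G.Adj u v) ∧
  (∀ s : Set V, ¬ IsWheel (G.induce s)) ∧
  (∀ s : Set V, ¬ IsGuardedFan (G.induce s) (Subtype.val ⁻¹' T)) ∧
  (∀ s : Set V, ¬ IsMountablePath (G.induce s) (Subtype.val ⁻¹' T))

/-- The graph of `pendent((G,T),t)`: a new vertex (`none`) is added whose only
neighbour is `t`. -/
def pendentGraph {V : Type u} (G : SimpleGraph V) (t : V) : SimpleGraph (Option V) :=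
  SimpleGraph.fromRel (fun a b =>
    (∃ u v : V, a = some u ∧ b = some v ∧ G.Adj u v) ∨ (a = none ∧ b = some t))

/-- The distinguished set of `pendent((G,T),t)`: `T' = (T ∪ {t'}) \ {t}`. -/
def pendentT {V : Type u} (T : Set V) (t : V) : Set (Option V) :=
  insert none (some '' (T \ {t}))

/-- The graph of `clone((G,T),t)`: a new vertex (`none`) is added whose neighbourhood is
exactly the neighbourhood of `t` in `G`. -/
def cloneGraph {V : Type u} (G : SimpleGraph V) (t : V) : SimpleGraph (Option V) :=
  SimpleGraph.fromRel (fun a b =>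
    (∃ u v : V, a = some u ∧ b = some v ∧ G.Adj u v) ∨
    (∃ v : V, a = none ∧ b = some v ∧ G.Adj t v))

/-- The distinguished set of `clone((G,T),t)`: `T' = T ∪ {t'}`. -/
def cloneT {V : Type u} (T : Set V) : Set (Option V) :=
  insert none (some '' T)

/-- The graph of `join((G₁,T₁), X, (G₂,T₂))`, where the bijection `φ : X ≃ T₂` prescribes
which vertex of `T₂` is identified with which vertex of `X`. -/
def joinGraph {V₁ V₂ : Type u} (G₁ : SimpleGraph V₁) (G₂ : SimpleGraph V₂)
    (X : Set V₁) (T₂ : Set V₂) (φ : X ≃ T₂) :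
    SimpleGraph (V₁ ⊕ {v : V₂ // v ∉ T₂}) :=
  SimpleGraph.fromRel (fun a b =>
    (∃ u v : V₁, a = Sum.inl u ∧ b = Sum.inl v ∧ G₁.Adj u v) ∨
    (∃ u v : {v : V₂ // v ∉ T₂}, a = Sum.inr u ∧ b = Sum.inr v ∧ G₂.Adj ↑u ↑v) ∨
    (∃ (x : X) (w : {v : V₂ // v ∉ T₂}), a = Sum.inl ↑x ∧ b = Sum.inr w ∧ G₂.Adj ↑(φ x) ↑w) ∨
    (∃ x y : X, a = Sum.inl ↑x ∧ b = Sum.inl ↑y ∧ G₂.Adj ↑(φ x) ↑(φ y)))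

/-- The distinguished set of `join((G₁,T₁), X, (G₂,T₂))` is `T₁`. -/
def joinT {V₁ V₂ : Type u} (T₁ : Set V₁) (T₂ : Set V₂) : Set (V₁ ⊕ {v : V₂ // v ∉ T₂}) :=
  Sum.inl '' T₁

/-- A *graph–stable-set pair*: a graph together with a set of (stable) sets of vertices. -/
structure GSPair : Type 1 where
  V : Type
  G : SimpleGraph V
  S : Set (Set V)

/-- The `NEXT` procedure of the Burling construction.  The new vertex type consists of the
original vertices, the vertices `(S, u)` of the copy `H_S` for each `S ∈ 𝒮`, and the new
vertices `v_{S,T}` for `S ∈ 𝒮` and `T ∈ 𝒮(H_S)`. -/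
def NEXT (P : GSPair) : GSPair where
  V := P.V ⊕ ((↥P.S × P.V) ⊕ (↥P.S × ↥P.S))
  G := SimpleGraph.fromRel (fun a b =>
    (∃ u v : P.V, a = Sum.inl u ∧ b = Sum.inl v ∧ P.G.Adj u v) ∨
    (∃ (S : ↥P.S) (u v : P.V),
      a = Sum.inr (Sum.inl (S, u)) ∧ b = Sum.inr (Sum.inl (S, v)) ∧ P.G.Adj u v) ∨
    (∃ (S T : ↥P.S) (u : P.V),
      a = Sum.inr (Sum.inr (S, T)) ∧ b = Sum.inr (Sum.inl (S, u)) ∧ u ∈ (T : Set P.V)))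
  S := { A | ∃ S T : ↥P.S,
      A = Sum.inl '' (S : Set P.V) ∪ (fun u => Sum.inr (Sum.inl (S, u))) '' (T : Set P.V) ∨
      A = insert (Sum.inr (Sum.inr (S, T))) (Sum.inl '' (S : Set P.V)) }

/-- `BurlingPair k` is the graph–stable-set pair `(G'_{k+1}, 𝒮_{k+1})`; in particular
`BurlingPair 0 = (K₁, {V(K₁)})` and `(BurlingPair (k-1)).G` is the `k`-th Burling graph. -/
def BurlingPair : ℕ → GSPair
  | 0 => ⟨Unit, ⊥, {Set.univ}⟩
  | (k + 1) => NEXT (BurlingPair k)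

/-- A *graft*: a graph together with a distinguished set of vertices. -/
structure GraftData : Type 1 where
  V : Type
  G : SimpleGraph V
  T : Set V

/-- The step `(G_k, T_k) ↦ (G_{k+1}, T_{k+1})` of the graft construction of Burling graphs,
with all the pendent, clone and join operations of the construction performed at once.

Vertices: `inl x` for `x ∈ V(G_k)`; `inr (inl ⟨u, w⟩)` for `u ∈ T_k` and
`w : ↥T_k ⊕ ↥T_k` with `w ≠ inl u`, the `2|T_k| - 1` clones of `u` (so that
`X_u = {u} ∪ {⟨u, w⟩}` has been identified with `S'_u ≃ T_k ⊕ T_k`, the vertex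
indexed by `inl v` being the copy of `v` in `S_u` and the vertex indexed by `inr v`
being the pendant `t_{u,v}`); and `inr (inr (u, y))` for the vertices of the copy
`H'_u` not in `S'_u`, namely `y = inl x` for a copy of `x ∈ V(G_k) \ T_k` and
`y = inr v` for the clone `v_u` of `v ∈ T_k`. -/
def nextGraft (P : GraftData) : GraftData where
  V := P.V ⊕ ((Σ u : ↥P.T, {w : ↥P.T ⊕ ↥P.T // w ≠ Sum.inl u}) ⊕
        (↥P.T × ({v : P.V // v ∉ P.T} ⊕ ↥P.T)))
  G := SimpleGraph.fromRel (fun a b =>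
    -- edges of `G_k`
    (∃ x y : P.V, a = Sum.inl x ∧ b = Sum.inl y ∧ P.G.Adj x y) ∨
    -- each clone of `u` is adjacent to `N_{G_k}(u)`
    (∃ (x : P.V) (u : ↥P.T) (w : {w : ↥P.T ⊕ ↥P.T // w ≠ Sum.inl u}),
      a = Sum.inl x ∧ b = Sum.inr (Sum.inl ⟨u, w⟩) ∧ P.G.Adj ↑u x) ∨
    -- `u` (identified with the copy of `u` in `S_u`) is adjacent to the copies of `N_{G_k}(u)`
    (∃ (u : ↥P.T) (x : {v : P.V // v ∉ P.T}),
      a = Sum.inl ↑u ∧ b = Sum.inr (Sum.inr (u, Sum.inl x)) ∧ P.G.Adj ↑u ↑x) ∨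
    -- the clone of `u` identified with the copy of `v ∈ S_u` is adjacent to copies of `N(v)`
    (∃ (u : ↥P.T) (w : {w : ↥P.T ⊕ ↥P.T // w ≠ Sum.inl u}) (v : ↥P.T)
        (x : {v : P.V // v ∉ P.T}),
      a = Sum.inr (Sum.inl ⟨u, w⟩) ∧ b = Sum.inr (Sum.inr (u, Sum.inl x)) ∧
        (w : ↥P.T ⊕ ↥P.T) = Sum.inl v ∧ P.G.Adj ↑v ↑x) ∨
    -- the clone of `u` identified with the pendant `t_{u,v}` is adjacent to the clone `v_u`
    (∃ (u : ↥P.T) (w : {w : ↥P.T ⊕ ↥P.T // w ≠ Sum.inl u}) (v : ↥P.T),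
      a = Sum.inr (Sum.inl ⟨u, w⟩) ∧ b = Sum.inr (Sum.inr (u, Sum.inr v)) ∧
        (w : ↥P.T ⊕ ↥P.T) = Sum.inr v) ∨
    -- edges of `G_k` inside the copy `H'_u`
    (∃ (u : ↥P.T) (x y : {v : P.V // v ∉ P.T}),
      a = Sum.inr (Sum.inr (u, Sum.inl x)) ∧ b = Sum.inr (Sum.inr (u, Sum.inl y)) ∧
        P.G.Adj ↑x ↑y) ∨
    -- the clone `v_u` is adjacent to the copies of `N_{G_k}(v)`
    (∃ (u : ↥P.T) (x : {v : P.V // v ∉ P.T}) (v : ↥P.T),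
      a = Sum.inr (Sum.inr (u, Sum.inl x)) ∧ b = Sum.inr (Sum.inr (u, Sum.inr v)) ∧
        P.G.Adj ↑v ↑x))
  T := { a | (∃ u ∈ P.T, a = Sum.inl u) ∨
      (∃ c : (Σ u : ↥P.T, {w : ↥P.T ⊕ ↥P.T // w ≠ Sum.inl u}), a = Sum.inr (Sum.inl c)) }

/-- `BurlingGraft k` is the graft `(G_{k+1}, T_{k+1})`; in particular
`BurlingGraft 0 = (K₂, {t})`. -/
def BurlingGraft : ℕ → GraftData
  | 0 => ⟨Bool, ⊤, {true}⟩
  | (k + 1) => nextGraft (BurlingGraft k)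

/-- The graph `G*` obtained from a graph–stable-set pair by adding, for each `S ∈ 𝒮`,
a new vertex `v_S` whose neighbourhood is exactly `S`. -/
def GStar (P : GSPair) : SimpleGraph (P.V ⊕ ↥P.S) :=
  SimpleGraph.fromRel (fun a b =>
    (∃ u v : P.V, a = Sum.inl u ∧ b = Sum.inl v ∧ P.G.Adj u v) ∨
    (∃ (S : ↥P.S) (u : P.V), a = Sum.inr S ∧ b = Sum.inl u ∧ u ∈ (S : Set P.V)))

/-- The grafts obtainable from the graft `(K₂, {t})` by a finite sequence of pendent,
clone and join operations. -/
inductive Obtainable : GraftData → Prop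
  | base : Obtainable ⟨Bool, ⊤, {true}⟩
  | pendent (P : GraftData) (hP : Obtainable P) (t : P.V) (ht : t ∈ P.T) :
      Obtainable ⟨Option P.V, pendentGraph P.G t, pendentT P.T t⟩
  | clone (P : GraftData) (hP : Obtainable P) (t : P.V) (ht : t ∈ P.T) :
      Obtainable ⟨Option P.V, cloneGraph P.G t, cloneT P.T⟩
  | join (P Q : GraftData) (hP : Obtainable P) (hQ : Obtainable Q)
      (X : Set P.V) (hX : X ⊆ P.T)
      (hnb : ∀ x ∈ X, ∀ y ∈ X, P.G.neighborSet x = P.G.neighborSet y)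
      (φ : X ≃ ↥Q.T) :
      Obtainable ⟨P.V ⊕ {v : Q.V // v ∉ Q.T}, joinGraph P.G Q.G X Q.T φ, Sum.inl '' P.T⟩


def BInv (P : GSPair) (Q : GraftData) : Prop :=
  ∃ (e : P.V ≃ {v : Q.V // v ∉ Q.T}) (f : ↥P.S ≃ ↥Q.T),
    (∀ u v, Q.G.Adj (e u).1 (e v).1 ↔ P.G.Adj u v) ∧
    ∀ (S : ↥P.S) (u : P.V), Q.G.Adj (f S).1 (e u).1 ↔ u ∈ S.1

theorem BInv_zero : BInv (BurlingPair 0) (BurlingGraft 0) := by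
  change BInv ⟨Unit, ⊥, {Set.univ}⟩ ⟨Bool, ⊤, {true}⟩
  refine ⟨⟨fun _ => ⟨false, by simp⟩, fun _ => (), fun _ => rfl, ?_⟩,
    ⟨fun _ => ⟨true, by simp⟩, fun _ => ⟨Set.univ, by simp⟩, ?_, ?_⟩, ?_, ?_⟩
  · rintro ⟨(_ | _), h⟩
    · rfl
    · simp at h
  · rintro ⟨S, h⟩
    have : S = Set.univ := h
    subst this; rfl
  · rintro ⟨b, h⟩
    have : b = true := h
    subst this; rfl
  · intro u v
    simp
  · rintro ⟨S, h⟩ u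
    have : S = Set.univ := h
    subst this
    simp

section
variable {P : GSPair} {Q : GraftData} (e : P.V ≃ {v : Q.V // v ∉ Q.T}) (f : ↥P.S ≃ ↥Q.T)

def vmap : (NEXT P).V → {v : (nextGraft Q).V // v ∉ (nextGraft Q).T}
  | Sum.inl u => ⟨Sum.inl (e u).1, by
      rintro (⟨v, hv, h⟩ | ⟨c, h⟩)
      · exact (e u).2 (by rw [Sum.inl.inj h]; exact hv)
      · cases h⟩
  | Sum.inr (Sum.inl (S, u)) => ⟨Sum.inr (Sum.inr (f S, Sum.inl (e u))), by
      rintro (⟨v, hv, h⟩ | ⟨c, h⟩) <;> cases h⟩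
  | Sum.inr (Sum.inr (S, T)) => ⟨Sum.inr (Sum.inr (f S, Sum.inr (f T))), by
      rintro (⟨v, hv, h⟩ | ⟨c, h⟩) <;> cases h⟩

theorem vmap_bij : Function.Bijective (vmap e f) := by
  constructor
  · rintro (u | ⟨S, u⟩ | ⟨S, T⟩) (u' | ⟨S', u'⟩ | ⟨S', T'⟩) h <;>
      have h' := congrArg Subtype.val h <;> simp only [vmap] at h'
    · have := Sum.inl.inj h'
      rw [e.injective (Subtype.ext this)]
    · cases h'
    · cases h'
    · cases h'
    · have := Sum.inr.inj (Sum.inr.inj h')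
      simp only [Prod.mk.injEq, Sum.inl.injEq, EmbeddingLike.apply_eq_iff_eq] at this
      rw [this.1, this.2]
    · have := congrArg Prod.snd (Sum.inr.inj (Sum.inr.inj h'))
      cases this
    · cases h'
    · have := congrArg Prod.snd (Sum.inr.inj (Sum.inr.inj h'))
      cases this
    · have := Sum.inr.inj (Sum.inr.inj h')
      simp only [Prod.mk.injEq, Sum.inr.injEq, EmbeddingLike.apply_eq_iff_eq] at this
      rw [this.1, this.2]
  · rintro ⟨(x | c | ⟨u, (x | v)⟩), h⟩
    · refine ⟨Sum.inl (e.symm ⟨x, fun hx => h (Or.inl ⟨x, hx, rfl⟩)⟩), ?_⟩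
      apply Subtype.ext
      simp [vmap]
      rfl
    · exact (h (Or.inr ⟨c, rfl⟩)).elim
    · refine ⟨Sum.inr (Sum.inl (f.symm u, e.symm x)), ?_⟩
      apply Subtype.ext
      simp [vmap]
      rfl
    · refine ⟨Sum.inr (Sum.inr (f.symm u, f.symm v)), ?_⟩
      apply Subtype.ext
      simp [vmap]
      rfl

def amap : ↥P.S × (↥P.S ⊕ ↥P.S) → ↥(NEXT P).S
  | (S, Sum.inl T) => ⟨Sum.inl '' (S : Set P.V) ∪
      (fun u => Sum.inr (Sum.inl (S, u))) '' (T : Set P.V), S, T, Or.inl rfl⟩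
  | (S, Sum.inr T) => ⟨insert (Sum.inr (Sum.inr (S, T))) (Sum.inl '' (S : Set P.V)),
      S, T, Or.inr rfl⟩

theorem mem_amap_inl (S : ↥P.S) (w) (u : P.V) :
    ((Sum.inl u : (NEXT P).V) ∈ (amap (S, w)).1) ↔ u ∈ S.1 := by
  rcases w with T | T
  · change ((Sum.inl u : P.V ⊕ ((↥P.S × P.V) ⊕ (↥P.S × ↥P.S))) ∈
      Sum.inl '' (S : Set P.V) ∪ (fun u => Sum.inr (Sum.inl (S, u))) '' (T : Set P.V)) ↔ _
    simp
  · change ((Sum.inl u : P.V ⊕ ((↥P.S × P.V) ⊕ (↥P.S × ↥P.S))) ∈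
      insert (Sum.inr (Sum.inr (S, T))) (Sum.inl '' (S : Set P.V))) ↔ _
    simp

theorem mem_amap_mid (S : ↥P.S) (w) (S' : ↥P.S) (u : P.V) :
    ((Sum.inr (Sum.inl (S', u)) : (NEXT P).V) ∈ (amap (S, w)).1) ↔
      S' = S ∧ ∃ T : ↥P.S, w = Sum.inl T ∧ u ∈ T.1 := by
  rcases w with T | T
  · change ((Sum.inr (Sum.inl (S', u)) : P.V ⊕ ((↥P.S × P.V) ⊕ (↥P.S × ↥P.S))) ∈
      Sum.inl '' (S : Set P.V) ∪ (fun u => Sum.inr (Sum.inl (S, u))) '' (T : Set P.V)) ↔ _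
    simp
    grind
  · change ((Sum.inr (Sum.inl (S', u)) : P.V ⊕ ((↥P.S × P.V) ⊕ (↥P.S × ↥P.S))) ∈
      insert (Sum.inr (Sum.inr (S, T))) (Sum.inl '' (S : Set P.V))) ↔ _
    simp

theorem mem_amap_inr (S : ↥P.S) (w) (S' T' : ↥P.S) :
    ((Sum.inr (Sum.inr (S', T')) : (NEXT P).V) ∈ (amap (S, w)).1) ↔
      S' = S ∧ w = Sum.inr T' := by
  rcases w with T | T
  · change ((Sum.inr (Sum.inr (S', T')) : P.V ⊕ ((↥P.S × P.V) ⊕ (↥P.S × ↥P.S))) ∈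
      Sum.inl '' (S : Set P.V) ∪ (fun u => Sum.inr (Sum.inl (S, u))) '' (T : Set P.V)) ↔ _
    simp
  · change ((Sum.inr (Sum.inr (S', T')) : P.V ⊕ ((↥P.S × P.V) ⊕ (↥P.S × ↥P.S))) ∈
      insert (Sum.inr (Sum.inr (S, T))) (Sum.inl '' (S : Set P.V))) ↔ _
    simp
    grind

theorem amap_bij : Function.Bijective (amap (P := P)) := by
  constructor
  · rintro ⟨S, w⟩ ⟨S', w'⟩ h
    have hS : S = S' := by
      apply Subtype.ext
      ext u
      rw [← mem_amap_inl S w, h, mem_amap_inl]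
    subst hS
    have h2 : ∀ T, w = Sum.inr T ↔ w' = Sum.inr T := by
      intro T
      have := mem_amap_inr S w S T
      rw [h, mem_amap_inr] at this
      simpa using this.symm
    have h3 : ∀ u, (∃ T : ↥P.S, w = Sum.inl T ∧ u ∈ T.1) ↔
        (∃ T : ↥P.S, w' = Sum.inl T ∧ u ∈ T.1) := by
      intro u
      have := mem_amap_mid S w S u
      rw [h, mem_amap_mid] at this
      simpa using this.symm
    rcases w with T | T
    · rcases w' with T' | T'
      · have : T = T' := by
          apply Subtype.ext
          ext u
          simpa using h3 u
        rw [this]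
      · simpa using h2 T'
    · have := (h2 T).1 rfl
      rw [this]
  · rintro ⟨A, S, T, h | h⟩
    · exact ⟨(S, Sum.inl T), Subtype.ext h.symm⟩
    · exact ⟨(S, Sum.inr T), Subtype.ext h.symm⟩

open Classical in
noncomputable def bmap (p : ↥P.S × (↥P.S ⊕ ↥P.S)) : ↥(nextGraft Q).T :=
  if h : Sum.map f f p.2 = Sum.inl (f p.1) then ⟨Sum.inl (f p.1).1, Or.inl ⟨_, (f p.1).2, rfl⟩⟩
  else ⟨Sum.inr (Sum.inl ⟨f p.1, ⟨Sum.map f f p.2, h⟩⟩), Or.inr ⟨_, rfl⟩⟩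

theorem map_eq_inl (w : ↥P.S ⊕ ↥P.S) (S : ↥P.S) :
    Sum.map f f w = Sum.inl (f S) ↔ w = Sum.inl S := by
  rcases w with T | T <;> simp

theorem bmap_bij : Function.Bijective (bmap f) := by
  constructor
  · rintro ⟨S, w⟩ ⟨S', w'⟩ h
    have h' := congrArg Subtype.val h
    simp only [bmap] at h'
    split_ifs at h' with h1 h2 h2
    · have := f.injective (Subtype.ext (Sum.inl.inj h'))
      subst this
      rw [map_eq_inl] at h1 h2
      rw [h1, h2]
    · have := Sum.inl.inj (Sum.inr.inj h')
      have hS : f S = f S' := congrArg Sigma.fst this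
      have hS := f.injective hS
      subst hS
      have h3 : Sum.map f f w = Sum.map f f w' := by
        simpa using this
      rw [(Sum.map_injective.2 ⟨f.injective, f.injective⟩) h3]
  · rintro ⟨a, ⟨u, hu, rfl⟩ | ⟨⟨u, w, hw⟩, rfl⟩⟩
    · refine ⟨(f.symm ⟨u, hu⟩, Sum.inl (f.symm ⟨u, hu⟩)), ?_⟩
      apply Subtype.ext
      simp [bmap]
      rfl
    · refine ⟨(f.symm u, Sum.map f.symm f.symm w), ?_⟩
      have hm : Sum.map f f (Sum.map f.symm f.symm w) = w := by
        rcases w with w | w <;> simp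
      apply Subtype.ext
      unfold bmap
      rw [dif_neg]
      · simp only [hm]
        have : ∀ (u' : ↥Q.T) (hh : w ≠ Sum.inl u'), u' = u →
            (⟨u', ⟨w, hh⟩⟩ : Σ u : ↥Q.T, {w : ↥Q.T ⊕ ↥Q.T // w ≠ Sum.inl u}) = ⟨u, ⟨w, hw⟩⟩ := by
          intro u' hh h
          subst h
          rfl
        exact congrArg (fun c => Sum.inr (Sum.inl c)) (this _ _ (by simp))
      · simp [hm, hw]

variable {e f}

abbrev NV (P : GSPair) := P.V ⊕ ((↥P.S × P.V) ⊕ (↥P.S × ↥P.S))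
abbrev QV (Q : GraftData) := Q.V ⊕ ((Σ u : ↥Q.T, {w : ↥Q.T ⊕ ↥Q.T // w ≠ Sum.inl u}) ⊕ (↥Q.T × ({v : Q.V // v ∉ Q.T} ⊕ ↥Q.T)))

theorem n_ll (u v : P.V) :
    (NEXT P).G.Adj (Sum.inl u : NV P) (Sum.inl v : NV P) ↔ P.G.Adj u v := by
  change (SimpleGraph.fromRel (V := NV P) _).Adj _ _ ↔ _
  rw [SimpleGraph.fromRel_adj]
  simp [SimpleGraph.adj_comm]
  try grind [SimpleGraph.Adj.ne, SimpleGraph.adj_comm]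

theorem n_lm (u : P.V) (S : ↥P.S) (v : P.V) :
    (NEXT P).G.Adj (Sum.inl u : NV P) (Sum.inr (Sum.inl (S, v)) : NV P) ↔ False := by
  change (SimpleGraph.fromRel (V := NV P) _).Adj _ _ ↔ _
  rw [SimpleGraph.fromRel_adj]
  simp [SimpleGraph.adj_comm]
  try grind [SimpleGraph.Adj.ne, SimpleGraph.adj_comm]

theorem n_lr (u : P.V) (S T : ↥P.S) :
    (NEXT P).G.Adj (Sum.inl u : NV P) (Sum.inr (Sum.inr (S, T)) : NV P) ↔ False := by
  change (SimpleGraph.fromRel (V := NV P) _).Adj _ _ ↔ _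
  rw [SimpleGraph.fromRel_adj]
  simp [SimpleGraph.adj_comm]
  try grind [SimpleGraph.Adj.ne, SimpleGraph.adj_comm]

theorem n_mm (S S' : ↥P.S) (u v : P.V) :
    (NEXT P).G.Adj (Sum.inr (Sum.inl (S, u)) : NV P) (Sum.inr (Sum.inl (S', v)) : NV P) ↔ S = S' ∧ P.G.Adj u v := by
  change (SimpleGraph.fromRel (V := NV P) _).Adj _ _ ↔ _
  rw [SimpleGraph.fromRel_adj]
  simp [SimpleGraph.adj_comm]
  try grind [SimpleGraph.Adj.ne, SimpleGraph.adj_comm]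

theorem n_mr (S S' T : ↥P.S) (u : P.V) :
    (NEXT P).G.Adj (Sum.inr (Sum.inl (S, u)) : NV P) (Sum.inr (Sum.inr (S', T)) : NV P) ↔ S = S' ∧ u ∈ T.1 := by
  change (SimpleGraph.fromRel (V := NV P) _).Adj _ _ ↔ _
  rw [SimpleGraph.fromRel_adj]
  simp [SimpleGraph.adj_comm]
  try grind [SimpleGraph.Adj.ne, SimpleGraph.adj_comm]

theorem n_rr (S S' T T' : ↥P.S) :
    (NEXT P).G.Adj (Sum.inr (Sum.inr (S, T)) : NV P) (Sum.inr (Sum.inr (S', T')) : NV P) ↔ False := by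
  change (SimpleGraph.fromRel (V := NV P) _).Adj _ _ ↔ _
  rw [SimpleGraph.fromRel_adj]
  simp [SimpleGraph.adj_comm]
  try grind [SimpleGraph.Adj.ne, SimpleGraph.adj_comm]

theorem g_ll (x y : Q.V) :
    (nextGraft Q).G.Adj (Sum.inl x : QV Q) (Sum.inl y : QV Q) ↔ Q.G.Adj x y := by
  change (SimpleGraph.fromRel (V := QV Q) _).Adj _ _ ↔ _
  rw [SimpleGraph.fromRel_adj]
  simp [SimpleGraph.adj_comm]
  try grind [SimpleGraph.Adj.ne, SimpleGraph.adj_comm]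

theorem g_lc (x : Q.V) (u : ↥Q.T) (w : {w : ↥Q.T ⊕ ↥Q.T // w ≠ Sum.inl u}) :
    (nextGraft Q).G.Adj (Sum.inr (Sum.inl ⟨u, w⟩) : QV Q) (Sum.inl x : QV Q) ↔ Q.G.Adj u.1 x := by
  change (SimpleGraph.fromRel (V := QV Q) _).Adj _ _ ↔ _
  rw [SimpleGraph.fromRel_adj]
  constructor
  · rintro ⟨-, (⟨_, _, h1, h2, h3⟩ | ⟨_, _, _, h1, h2, h3⟩ | ⟨_, _, h1, h2, h3⟩ |
      ⟨_, _, _, _, h1, h2, h3, h4⟩ | ⟨_, _, _, h1, h2, h3⟩ | ⟨_, _, _, h1, h2, h3⟩ |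
      ⟨_, _, _, h1, h2, h3⟩) | (⟨_, _, h1, h2, h3⟩ | ⟨_, _, _, h1, h2, h3⟩ | ⟨_, _, h1, h2, h3⟩ |
      ⟨_, _, _, _, h1, h2, h3, h4⟩ | ⟨_, _, _, h1, h2, h3⟩ | ⟨_, _, _, h1, h2, h3⟩ |
      ⟨_, _, _, h1, h2, h3⟩)⟩ <;> cases h1 <;> cases h2
    exact h3
  · intro h
    exact ⟨by simp, Or.inr (Or.inr (Or.inl ⟨x, u, w, rfl, rfl, h⟩))⟩

theorem g_lx (x : Q.V) (u : ↥Q.T) (y : {v : Q.V // v ∉ Q.T}) :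
    (nextGraft Q).G.Adj (Sum.inl x : QV Q) (Sum.inr (Sum.inr (u, Sum.inl y)) : QV Q) ↔ x = u.1 ∧ Q.G.Adj x y.1 := by
  change (SimpleGraph.fromRel (V := QV Q) _).Adj _ _ ↔ _
  rw [SimpleGraph.fromRel_adj]
  simp [SimpleGraph.adj_comm]
  try grind [SimpleGraph.Adj.ne, SimpleGraph.adj_comm]

theorem g_ly (x : Q.V) (u v : ↥Q.T) :
    (nextGraft Q).G.Adj (Sum.inl x : QV Q) (Sum.inr (Sum.inr (u, Sum.inr v)) : QV Q) ↔ False := by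
  change (SimpleGraph.fromRel (V := QV Q) _).Adj _ _ ↔ _
  rw [SimpleGraph.fromRel_adj]
  simp [SimpleGraph.adj_comm]
  try grind [SimpleGraph.Adj.ne, SimpleGraph.adj_comm]

theorem g_cx (u : ↥Q.T) (w : {w : ↥Q.T ⊕ ↥Q.T // w ≠ Sum.inl u}) (u' : ↥Q.T) (y : {v : Q.V // v ∉ Q.T}) :
    (nextGraft Q).G.Adj (Sum.inr (Sum.inl ⟨u, w⟩) : QV Q) (Sum.inr (Sum.inr (u', Sum.inl y)) : QV Q) ↔ u = u' ∧ ∃ v, w.1 = Sum.inl v ∧ Q.G.Adj v.1 y.1 := by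
  change (SimpleGraph.fromRel (V := QV Q) _).Adj _ _ ↔ _
  rw [SimpleGraph.fromRel_adj]
  constructor
  · rintro ⟨-, (⟨_, _, h1, h2, h3⟩ | ⟨_, _, _, h1, h2, h3⟩ | ⟨_, _, h1, h2, h3⟩ |
      ⟨_, _, _, _, h1, h2, h3, h4⟩ | ⟨_, _, _, h1, h2, h3⟩ | ⟨_, _, _, h1, h2, h3⟩ |
      ⟨_, _, _, h1, h2, h3⟩) | (⟨_, _, h1, h2, h3⟩ | ⟨_, _, _, h1, h2, h3⟩ | ⟨_, _, h1, h2, h3⟩ |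
      ⟨_, _, _, _, h1, h2, h3, h4⟩ | ⟨_, _, _, h1, h2, h3⟩ | ⟨_, _, _, h1, h2, h3⟩ |
      ⟨_, _, _, h1, h2, h3⟩)⟩ <;> cases h1 <;> cases h2
    exact ⟨rfl, _, h3, h4⟩
  · rintro ⟨rfl, v, h, h'⟩
    exact ⟨by simp, Or.inl (Or.inr (Or.inr (Or.inr (Or.inl ⟨u, w, v, y, rfl, rfl, h, h'⟩))))⟩

theorem g_cy (u : ↥Q.T) (w : {w : ↥Q.T ⊕ ↥Q.T // w ≠ Sum.inl u}) (u' v : ↥Q.T) :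
    (nextGraft Q).G.Adj (Sum.inr (Sum.inl ⟨u, w⟩) : QV Q) (Sum.inr (Sum.inr (u', Sum.inr v)) : QV Q) ↔ u = u' ∧ w.1 = Sum.inr v := by
  change (SimpleGraph.fromRel (V := QV Q) _).Adj _ _ ↔ _
  rw [SimpleGraph.fromRel_adj]
  constructor
  · rintro ⟨-, (⟨_, _, h1, h2, h3⟩ | ⟨_, _, _, h1, h2, h3⟩ | ⟨_, _, h1, h2, h3⟩ |
      ⟨_, _, _, _, h1, h2, h3, h4⟩ | ⟨_, _, _, h1, h2, h3⟩ | ⟨_, _, _, h1, h2, h3⟩ |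
      ⟨_, _, _, h1, h2, h3⟩) | (⟨_, _, h1, h2, h3⟩ | ⟨_, _, _, h1, h2, h3⟩ | ⟨_, _, h1, h2, h3⟩ |
      ⟨_, _, _, _, h1, h2, h3, h4⟩ | ⟨_, _, _, h1, h2, h3⟩ | ⟨_, _, _, h1, h2, h3⟩ |
      ⟨_, _, _, h1, h2, h3⟩)⟩ <;> cases h1 <;> cases h2
    exact ⟨rfl, h3⟩
  · rintro ⟨rfl, h⟩
    exact ⟨by simp, Or.inl (Or.inr (Or.inr (Or.inr (Or.inr (Or.inl ⟨u, w, v, rfl, rfl, h⟩)))))⟩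

theorem g_xx (u u' : ↥Q.T) (x y : {v : Q.V // v ∉ Q.T}) :
    (nextGraft Q).G.Adj (Sum.inr (Sum.inr (u, Sum.inl x)) : QV Q) (Sum.inr (Sum.inr (u', Sum.inl y)) : QV Q) ↔ u = u' ∧ Q.G.Adj x.1 y.1 := by
  change (SimpleGraph.fromRel (V := QV Q) _).Adj _ _ ↔ _
  rw [SimpleGraph.fromRel_adj]
  simp [SimpleGraph.adj_comm]
  try grind [SimpleGraph.Adj.ne, SimpleGraph.adj_comm]

theorem g_xy (u u' v : ↥Q.T) (x : {v : Q.V // v ∉ Q.T}) :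
    (nextGraft Q).G.Adj (Sum.inr (Sum.inr (u, Sum.inl x)) : QV Q) (Sum.inr (Sum.inr (u', Sum.inr v)) : QV Q) ↔ u = u' ∧ Q.G.Adj v.1 x.1 := by
  change (SimpleGraph.fromRel (V := QV Q) _).Adj _ _ ↔ _
  rw [SimpleGraph.fromRel_adj]
  simp [SimpleGraph.adj_comm]
  try grind [SimpleGraph.Adj.ne, SimpleGraph.adj_comm]

theorem g_yy (u u' v v' : ↥Q.T) :
    (nextGraft Q).G.Adj (Sum.inr (Sum.inr (u, Sum.inr v)) : QV Q) (Sum.inr (Sum.inr (u', Sum.inr v')) : QV Q) ↔ False := by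
  change (SimpleGraph.fromRel (V := QV Q) _).Adj _ _ ↔ _
  rw [SimpleGraph.fromRel_adj]
  simp [SimpleGraph.adj_comm]
  try grind [SimpleGraph.Adj.ne, SimpleGraph.adj_comm]

theorem vmap_adj (h1 : ∀ u v, Q.G.Adj (e u).1 (e v).1 ↔ P.G.Adj u v)
    (h2 : ∀ (S : ↥P.S) (u : P.V), Q.G.Adj (f S).1 (e u).1 ↔ u ∈ S.1) (a b : (NEXT P).V) :
    (nextGraft Q).G.Adj (vmap e f a).1 (vmap e f b).1 ↔ (NEXT P).G.Adj a b := by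
  rcases a with (u | ⟨S, u⟩ | ⟨S, T⟩) <;> rcases b with (u' | ⟨S', u'⟩ | ⟨S', T'⟩)
  · exact (g_ll _ _).trans ((h1 _ _).trans (n_ll _ _).symm)
  · refine (g_lx _ _ _).trans (Iff.trans ?_ (n_lm _ _ _).symm)
    exact iff_of_false (fun h => (e u).2 (h.1 ▸ (f S').2)) id
  · exact (g_ly _ _ _).trans (n_lr _ _ _).symm
  · refine (SimpleGraph.adj_comm _ _ _).trans (Iff.trans ?_ (SimpleGraph.adj_comm _ _ _))
    refine (g_lx _ _ _).trans (Iff.trans ?_ (n_lm _ _ _).symm)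
    exact iff_of_false (fun h => (e u').2 (h.1 ▸ (f S).2)) id
  · refine (g_xx _ _ _ _).trans (Iff.trans ?_ (n_mm _ _ _ _).symm)
    rw [h1, f.injective.eq_iff]
  · refine (g_xy _ _ _ _).trans (Iff.trans ?_ (n_mr _ _ _ _).symm)
    rw [h2, f.injective.eq_iff]
  · refine (SimpleGraph.adj_comm _ _ _).trans (Iff.trans ?_ (SimpleGraph.adj_comm _ _ _))
    exact (g_ly _ _ _).trans (n_lr _ _ _).symm
  · refine (SimpleGraph.adj_comm _ _ _).trans (Iff.trans ?_ (SimpleGraph.adj_comm _ _ _))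
    refine (g_xy _ _ _ _).trans (Iff.trans ?_ (n_mr _ _ _ _).symm)
    rw [h2, f.injective.eq_iff]
  · exact (g_yy _ _ _ _).trans (n_rr _ _ _ _).symm

theorem bmap_adj (h2 : ∀ (S : ↥P.S) (u : P.V), Q.G.Adj (f S).1 (e u).1 ↔ u ∈ S.1)
    (p : ↥P.S × (↥P.S ⊕ ↥P.S)) (b : (NEXT P).V) :
    (nextGraft Q).G.Adj (bmap f p).1 (vmap e f b).1 ↔ b ∈ (amap p).1 := by
  obtain ⟨S, w⟩ := p
  unfold bmap
  split_ifs with h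
  · rw [map_eq_inl] at h
    simp only at h
    subst h
    rcases b with (u' | ⟨S', u'⟩ | ⟨S', T'⟩)
    · refine (g_ll _ _).trans (Iff.trans ?_ (mem_amap_inl _ _ _).symm)
      rw [h2]
    · refine (g_lx _ _ _).trans (Iff.trans ?_ (mem_amap_mid _ _ _ _).symm)
      rw [h2]
      simp [Subtype.ext_iff.symm, eq_comm]
    · refine (g_ly _ _ _).trans (Iff.trans ?_ (mem_amap_inr _ _ _ _).symm)
      simp
  · rcases b with (u' | ⟨S', u'⟩ | ⟨S', T'⟩)
    · refine (g_lc _ _ _).trans (Iff.trans ?_ (mem_amap_inl _ _ _).symm)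
      rw [h2]
    · refine (g_cx _ _ _ _).trans (Iff.trans ?_ (mem_amap_mid _ _ _ _).symm)
      rcases w with T | T <;> simp [h2, eq_comm]
    · refine (g_cy _ _ _ _).trans (Iff.trans ?_ (mem_amap_inr _ _ _ _).symm)
      rcases w with T | T <;> simp [eq_comm]

end

theorem BInv_succ {P : GSPair} {Q : GraftData} (h : BInv P Q) : BInv (NEXT P) (nextGraft Q) := by
  obtain ⟨e, f, h1, h2⟩ := h
  refine ⟨Equiv.ofBijective _ (vmap_bij e f),
    (Equiv.ofBijective _ amap_bij).symm.trans (Equiv.ofBijective _ (bmap_bij f)), ?_, ?_⟩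
  · intro u v
    exact vmap_adj h1 h2 u v
  · intro S u
    obtain ⟨p, rfl⟩ := amap_bij.2 S
    have : (Equiv.ofBijective _ amap_bij).symm (amap p) = p :=
      (Equiv.ofBijective _ amap_bij).symm_apply_apply p
    rw [Equiv.trans_apply, this]
    exact bmap_adj h2 p u

theorem BInv_all (k : ℕ) : BInv (BurlingPair k) (BurlingGraft k) := by
  induction k with
  | zero => exact BInv_zero
  | succ k ih => exact BInv_succ ih

theorem burling_isomorphic_induced_subgraph (k : ℕ) (hk : 0 < k) :
    (∃ s : Set (BurlingGraft (k - 1)).V,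
      Nonempty ((BurlingPair (k - 1)).G ≃g (BurlingGraft (k - 1)).G.induce s)) ∧
    Nonempty ((BurlingPair (k - 1)).G ≃g
      (BurlingGraft (k - 1)).G.induce {v | v ∉ (BurlingGraft (k - 1)).T}) := by
  obtain ⟨e, f, h1, h2⟩ := BInv_all (k - 1)
  have : Nonempty ((BurlingPair (k - 1)).G ≃g
      (BurlingGraft (k - 1)).G.induce {v | v ∉ (BurlingGraft (k - 1)).T}) :=
    ⟨⟨e, fun {a b} => h1 a b⟩⟩
  exact ⟨⟨_, this⟩, this⟩
end

section
/- If W is a triangle-free wheel, then W contains no pair of distinct vertices u,v with N_W(u) = N_W(v). -/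
universe u

theorem cyc_nbr (m : ℕ) (i k : Fin (m+4)) (h : (SimpleGraph.cycleGraph (m+4)).Adj i k) :
    k = i - 1 ∨ k = i + 1 := by
  rw [SimpleGraph.cycleGraph_adj] at h
  rcases h with h | h
  · left; rw [← h]; abel
  · right; rw [← h]; abel

theorem cyc_succ (m : ℕ) (i : Fin (m+4)) : (SimpleGraph.cycleGraph (m+4)).Adj i (i+1) := by
  rw [SimpleGraph.cycleGraph_adj]; right; abel

theorem cyc_pred (m : ℕ) (i : Fin (m+4)) : (SimpleGraph.cycleGraph (m+4)).Adj i (i-1) := by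
  rw [SimpleGraph.cycleGraph_adj]; left; abel

theorem cyc_four (m : ℕ) (i j : Fin (m+4)) (hij : i ≠ j)
    (h : ∀ k, (SimpleGraph.cycleGraph (m+4)).Adj i k ↔ (SimpleGraph.cycleGraph (m+4)).Adj j k) :
    m = 0 := by
  have h1 := cyc_nbr m j _ ((h _).1 (cyc_succ m i))
  have h2 := cyc_nbr m j _ ((h _).1 (cyc_pred m i))
  have e1 : i + 1 = j - 1 := h1.resolve_right (fun h => hij (add_right_cancel h))
  have e2 : i - 1 = j + 1 := h2.resolve_left (fun h => hij (sub_left_injective h))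
  have e3 : (1 + 1 + 1 + 1 : Fin (m+4)) = 0 := by
    have : (i + 1) - (i - 1) = (j - 1) - (j + 1) := by rw [e1, e2]
    have a1 : (i + 1) - (i - 1) = 1 + 1 := by abel
    have a2 : (j - 1) - (j + 1) = -(1 + 1) := by abel
    rw [a1, a2] at this
    rw [add_assoc (1+1 : Fin (m+4))]
    exact eq_neg_iff_add_eq_zero.mp this
  rcases m with _ | m
  · rfl
  · exfalso
    have := congrArg Fin.val e3
    have o : ((1 : Fin (m+1+4)) : ℕ) = 1 := Fin.val_one (m+3)
    have z : ((0 : Fin (m+1+4)) : ℕ) = 0 := rfl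
    rw [Fin.val_add, Fin.val_add, Fin.val_add, o, z, Nat.mod_eq_of_lt (a := 1 + 1) (by omega),
      Nat.mod_eq_of_lt (a := 1 + 1 + 1) (by omega),
      Nat.mod_eq_of_lt (a := 1 + 1 + 1 + 1) (by omega)] at this
    omega

/-- A triangle-free wheel contains no pair of distinct vertices with the same
neighbourhood. -/
theorem wheel_no_twins {V : Type u} (W : SimpleGraph V)
    (hW : IsWheel W) (htf : W.CliqueFree 3) :
    ∀ u v : V, u ≠ v → W.neighborSet u ≠ W.neighborSet v := by
  rintro u v huv hN
  obtain ⟨w, n, hn, ⟨e⟩, h3⟩ := hW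
  obtain ⟨m, rfl⟩ := Nat.exists_eq_add_of_le' hn
  let f : Fin (m+4) → V := fun i => (e.symm i).1
  have hf : ∀ i j, W.Adj (f i) (f j) ↔ (SimpleGraph.cycleGraph (m+4)).Adj i j := by
    intro i j
    exact e.symm.map_adj_iff
  have hs : ∀ x, x ≠ w → ∃ i, f i = x := by
    intro x hx
    exact ⟨e ⟨x, hx⟩, by simp [f]⟩
  have small : ∀ a b : V, ¬ W.neighborSet w ⊆ {a, b} := by
    intro a b hab
    have h1 := Set.ncard_le_ncard hab (Set.toFinite _)
    have h2 := Set.ncard_insert_le a {b}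
    rw [Set.ncard_singleton] at h2
    omega
  have hub : ∀ x, x ≠ w → W.neighborSet w ≠ W.neighborSet x := by
    intro x hx hN
    obtain ⟨i, rfl⟩ := hs x hx
    apply small (f (i-1)) (f (i+1))
    intro y hy
    have hyw : y ≠ w := fun h => W.ne_of_adj hy h.symm
    obtain ⟨k, rfl⟩ := hs y hyw
    rw [hN] at hy
    rcases cyc_nbr m i k ((hf _ _).1 hy) with rfl | rfl <;> simp
  by_cases huw : u = w
  · subst huw; exact hub v huv.symm hN
  by_cases hvw : v = w
  · subst hvw; exact hub u huv hN.symm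
  obtain ⟨i, rfl⟩ := hs u huw
  obtain ⟨j, rfl⟩ := hs v hvw
  have hm : m = 0 := by
    apply cyc_four m i j (fun h => huv (by rw [h]))
    intro k
    rw [← hf, ← hf]
    exact Set.ext_iff.1 hN (f k)
  subst hm
  have tri : ∀ k, W.Adj w (f k) → W.Adj w (f (k+1)) → False := by
    intro k h1 h2
    classical
    exact htf {w, f k, f (k+1)}
      (SimpleGraph.is3Clique_triple_iff.2 ⟨h1, h2, (hf _ _).2 (cyc_succ 0 k)⟩)
  have key : ∀ p q : V, (∀ k, W.Adj w (f k) → f k = p ∨ f k = q) → False := by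
    intro p q h
    apply small p q
    intro y hy
    have hyw : y ≠ w := fun h => W.ne_of_adj hy h.symm
    obtain ⟨k, rfl⟩ := hs y hyw
    exact h k hy
  have t0 := tri 0
  have t2 := tri 2
  change W.Adj w (f 0) → W.Adj w (f 1) → False at t0
  change W.Adj w (f 2) → W.Adj w (f 3) → False at t2
  by_cases h0 : W.Adj w (f 0) <;> by_cases h2 : W.Adj w (f 2)
  · apply key (f 0) (f 2); intro k hk; fin_cases k <;> simp_all
  · apply key (f 0) (f 3); intro k hk; fin_cases k <;> simp_all
  · apply key (f 1) (f 2); intro k hk; fin_cases k <;> simp_all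
  · apply key (f 1) (f 3); intro k hk; fin_cases k <;> simp_all
end

section
/- If F is a triangle-free fan, then F contains no pair of distinct vertices u,v with N_F(u) = N_F(v). -/
universe u

/-- A triangle-free fan contains no pair of distinct vertices with the same
neighbourhood. -/
theorem fan_no_twins {V : Type u} (F : SimpleGraph V)
    (hF : IsFan F) (htf : F.CliqueFree 3) :
    ∀ u v : V, u ≠ v → F.neighborSet u ≠ F.neighborSet v := by
  classical
  obtain ⟨f, ⟨n, ⟨e⟩⟩, h3⟩ := hF
  have hadj : ∀ (x y : V) (hx : x ≠ f) (hy : y ≠ f), F.Adj x y ↔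
      ((e ⟨x, hx⟩).val + 1 = (e ⟨y, hy⟩).val ∨ (e ⟨y, hy⟩).val + 1 = (e ⟨x, hx⟩).val) := by
    intro x y hx hy
    rw [← SimpleGraph.pathGraph_adj, e.map_adj_iff]
    rfl
  have hinj : ∀ (x y : V) (hx : x ≠ f) (hy : y ≠ f), x ≠ y →
      (e ⟨x, hx⟩).val ≠ (e ⟨y, hy⟩).val := by
    intro x y hx hy hne h
    have := e.injective (Fin.ext h)
    exact hne (congrArg Subtype.val this)
  have hsurj : ∀ i, i < n → ∃ (x : V) (hx : x ≠ f), (e ⟨x, hx⟩).val = i := by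
    intro i hi
    refine ⟨(e.symm ⟨i, hi⟩).1, (e.symm ⟨i, hi⟩).2, ?_⟩
    have : e (e.symm ⟨i, hi⟩) = ⟨i, hi⟩ := e.apply_symm_apply _
    exact congrArg Fin.val this
  have hfin : (F.neighborSet f).Finite := Set.finite_of_ncard_pos (by omega)
  obtain ⟨a, b, c, ha, hb, hc, hab, hac, hbc⟩ := (Set.two_lt_ncard_iff hfin).1 h3
  rw [SimpleGraph.mem_neighborSet] at ha hb hc
  have tri : ∀ x y, F.Adj f x → F.Adj f y → ¬ F.Adj x y := by
    intro x y hx hy hxy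
    exact htf {f, x, y} (SimpleGraph.is3Clique_triple_iff.2 ⟨hx, hy, hxy⟩)
  have iab := hinj a b ha.ne' hb.ne' hab
  have iac := hinj a c ha.ne' hc.ne' hac
  have ibc := hinj b c hb.ne' hc.ne' hbc
  have tab := tri a b ha hb
  have tac := tri a c ha hc
  have tbc := tri b c hb hc
  rw [hadj _ _ ha.ne' hb.ne'] at tab
  rw [hadj _ _ ha.ne' hc.ne'] at tac
  rw [hadj _ _ hb.ne' hc.ne'] at tbc
  have la := (e ⟨a, ha.ne'⟩).isLt
  have lb := (e ⟨b, hb.ne'⟩).isLt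
  have lc := (e ⟨c, hc.ne'⟩).isLt
  have hn : 5 ≤ n := by omega
  have key1 : ∀ p, p ≠ f → F.neighborSet f ≠ F.neighborSet p := by
    intro p hp h
    have h' : ∀ x, F.Adj f x → F.Adj p x := fun x hx => by
      have : x ∈ F.neighborSet f := hx
      rw [h] at this
      exact this
    have a1 := (hadj _ _ hp ha.ne').1 (h' a ha)
    have b1 := (hadj _ _ hp hb.ne').1 (h' b hb)
    have c1 := (hadj _ _ hp hc.ne').1 (h' c hc)
    omega
  have key2 : ∀ p q (hp : p ≠ f) (hq : q ≠ f), F.neighborSet p = F.neighborSet q →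
      ¬ (e ⟨p, hp⟩).val < (e ⟨q, hq⟩).val := by
    intro p q hp hq h hlt
    have hiff : ∀ i, i < n → (((e ⟨p, hp⟩).val + 1 = i ∨ i + 1 = (e ⟨p, hp⟩).val) ↔
        ((e ⟨q, hq⟩).val + 1 = i ∨ i + 1 = (e ⟨q, hq⟩).val)) := by
      intro i hi
      obtain ⟨x, hx, rfl⟩ := hsurj i hi
      rw [← hadj, ← hadj, ← SimpleGraph.mem_neighborSet, h, SimpleGraph.mem_neighborSet]
    have lp := (e ⟨p, hp⟩).isLt
    have lq := (e ⟨q, hq⟩).isLt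
    have h1 := hiff ((e ⟨p, hp⟩).val - 1) (by omega)
    have h2 := hiff ((e ⟨p, hp⟩).val + 1) (by omega)
    by_cases h5 : (e ⟨q, hq⟩).val + 1 < n
    · have h4 := hiff _ h5
      omega
    · omega
  intro u v huv h
  by_cases hu : u = f
  · subst hu
    exact key1 v huv.symm h
  by_cases hv : v = f
  · subst hv
    exact key1 u huv h.symm
  have := hinj u v hu hv huv
  have h1 := key2 u v hu hv h
  have h2 := key2 v u hv hu h.symm
  omega
end

section
/- No wheel contains an induced theta; that is, no induced subgraph of a wheel is a theta. -/
universe u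

theorem closed_of_walk_aux {α : Type*} {G : SimpleGraph α} {S : Set α}
    (hS : ∀ x ∈ S, ∀ y, G.Adj x y → y ∈ S) {x y : α} (p : G.Walk x y) (hx : x ∈ S) : y ∈ S := by
  induction p with
  | nil => exact hx
  | cons h p ih => exact ih (hS _ hx _ h)

theorem cycle_nbr_aux {n : ℕ} (hn : 4 ≤ n) {v x y z : Fin n}
    (hx : (SimpleGraph.cycleGraph n).Adj v x) (hy : (SimpleGraph.cycleGraph n).Adj v y)
    (hz : (SimpleGraph.cycleGraph n).Adj v z) (hxy : x ≠ y) : z = x ∨ z = y := by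
  obtain ⟨m, rfl⟩ : ∃ m, n = m + 2 := ⟨n - 2, by omega⟩
  have key : ∀ t, (SimpleGraph.cycleGraph (m + 2)).Adj v t → t = v - 1 ∨ t = v + 1 := by
    intro t ht
    have : t ∈ (SimpleGraph.cycleGraph (m + 2)).neighborSet v := ht
    rw [SimpleGraph.cycleGraph_neighborSet] at this
    simpa using this
  have h1 := key _ hx
  have h2 := key _ hy
  have h3 := key _ hz
  grind

/-- Each vertex on one of two disjoint paths has two neighbours on their union. -/
theorem two_nbrs_aux {α : Type*} {G : SimpleGraph α} {a b : α} (hab : a ≠ b) (p q : G.Walk a b)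
    (hp : p.IsPath) (lp : 2 ≤ p.length) (lq : 2 ≤ q.length) (hq : q.IsPath)
    (hd : ∀ v, v ∈ p.support → v ∈ q.support → v = a ∨ v = b) (u : α) (hu : u ∈ p.support) :
    ∃ x y, x ≠ y ∧ G.Adj u x ∧ G.Adj u y ∧ (x ∈ p.support ∨ x ∈ q.support) ∧
      (y ∈ p.support ∨ y ∈ q.support) := by
  obtain ⟨i, rfl, hi⟩ := SimpleGraph.Walk.mem_support_iff_exists_getVert.1 hu
  have inj := hp.getVert_injOn
  have injq := hq.getVert_injOn
  rcases Nat.eq_zero_or_pos i with rfl | hpos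
  · refine ⟨p.getVert 1, q.getVert 1, ?_, p.adj_getVert_succ (by omega), ?_,
      Or.inl (p.getVert_mem_support _), Or.inr (q.getVert_mem_support _)⟩
    · intro h
      rcases hd _ (p.getVert_mem_support 1) (h ▸ q.getVert_mem_support 1) with h' | h'
      · have := inj (x₁ := 1) (x₂ := 0) (by simp; omega) (by simp) (by simpa using h')
        omega
      · have := inj (x₁ := 1) (x₂ := p.length) (by simp; omega) (by simp) (by simpa using h')
        omega
    · have := q.adj_getVert_succ (i := 0) (by omega)
      simpa using this
  · rcases Nat.lt_or_ge i p.length with hlt | hge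
    · refine ⟨p.getVert (i - 1), p.getVert (i + 1), ?_, ?_, p.adj_getVert_succ hlt,
        Or.inl (p.getVert_mem_support _), Or.inl (p.getVert_mem_support _)⟩
      · intro h
        have := inj (x₁ := i - 1) (x₂ := i + 1) (by simp; omega) (by simp; omega) h
        omega
      · have := p.adj_getVert_succ (i := i - 1) (by omega)
        rw [Nat.sub_add_cancel hpos] at this
        exact this.symm
    · obtain rfl : i = p.length := le_antisymm hi hge
      refine ⟨p.getVert (p.length - 1), q.getVert (q.length - 1), ?_, ?_, ?_,
        Or.inl (p.getVert_mem_support _), Or.inr (q.getVert_mem_support _)⟩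
      · intro h
        rcases hd _ (p.getVert_mem_support _) (h ▸ q.getVert_mem_support _) with h' | h'
        · have := inj (x₁ := p.length - 1) (x₂ := 0) (by simp) (by simp)
            (by simpa using h')
          omega
        · have := inj (x₁ := p.length - 1) (x₂ := p.length) (by simp) (by simp)
            (by simpa using h')
          omega
      · have := p.adj_getVert_succ (i := p.length - 1) (by omega)
        rw [Nat.sub_add_cancel (by omega)] at this
        exact this.symm
      · have := q.adj_getVert_succ (i := q.length - 1) (by omega)
        rw [Nat.sub_add_cancel (by omega)] at this
        simpa using this.symm

theorem core_aux {V : Type u} {W : SimpleGraph V} {w : V}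
    (H1 : ∀ v x y z, v ≠ w → x ≠ w → y ≠ w → z ≠ w → W.Adj v x → W.Adj v y → W.Adj v z →
      x ≠ y → z = x ∨ z = y)
    (H2 : ∀ (S : Set V) (a : V), a ∈ S → a ≠ w →
      (∀ v ∈ S, v ≠ w → ∀ z, z ≠ w → W.Adj v z → z ∈ S) → ∀ v, v ≠ w → v ∈ S)
    (H3 : ∀ a b : V, ∃ c, c ≠ a ∧ c ≠ b ∧ W.Adj w c)
    {s : Set V} {a b : s} (p₁ p₂ p₃ : (W.induce s).Walk a b) (hab : a ≠ b)
    (h2 : p₂.IsPath) (h3 : p₃.IsPath) (l2 : 2 ≤ p₂.length) (l3 : 2 ≤ p₃.length)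
    (d12 : ∀ v, v ∈ p₁.support → v ∈ p₂.support → v = a ∨ v = b)
    (d13 : ∀ v, v ∈ p₁.support → v ∈ p₃.support → v = a ∨ v = b)
    (d23 : ∀ v, v ∈ p₂.support → v ∈ p₃.support → v = a ∨ v = b)
    (he : ∀ e ∈ (W.induce s).edgeSet, e ∈ p₁.edges ∨ e ∈ p₂.edges ∨ e ∈ p₃.edges)
    (haw : a.1 ≠ w) (hbw : b.1 ≠ w) (hws : w ∈ s) (hw : (⟨w, hws⟩ : s) ∈ p₁.support) :
    False := by
  have n2 : (⟨w, hws⟩ : s) ∉ p₂.support := fun h => by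
    rcases d12 _ hw h with h | h
    · exact haw (h ▸ rfl)
    · exact hbw (h ▸ rfl)
  have n3 : (⟨w, hws⟩ : s) ∉ p₃.support := fun h => by
    rcases d13 _ hw h with h | h
    · exact haw (h ▸ rfl)
    · exact hbw (h ▸ rfl)
  have key := H2 {v | ∃ h : v ∈ s, (⟨v, h⟩ : s) ∈ p₂.support ∨ (⟨v, h⟩ : s) ∈ p₃.support} a.1
    ⟨a.2, Or.inl p₂.start_mem_support⟩ haw (by
      rintro v ⟨hvs, hv⟩ hvw z hzw hvz
      have : ∃ x y, x ≠ y ∧ (W.induce s).Adj ⟨v, hvs⟩ x ∧ (W.induce s).Adj ⟨v, hvs⟩ y ∧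
          (x ∈ p₂.support ∨ x ∈ p₃.support) ∧ (y ∈ p₂.support ∨ y ∈ p₃.support) := by
        rcases hv with hv | hv
        · exact two_nbrs_aux hab p₂ p₃ h2 l2 l3 h3 d23 _ hv
        · obtain ⟨x, y, h, h', h'', hx, hy⟩ :=
            two_nbrs_aux hab p₃ p₂ h3 l3 l2 h2 (fun v a b => d23 v b a) _ hv
          exact ⟨x, y, h, h', h'', hx.symm, hy.symm⟩
      obtain ⟨x, y, hxy, hx, hy, hx', hy'⟩ := this
      have nw : ∀ x : s, (x ∈ p₂.support ∨ x ∈ p₃.support) → x.1 ≠ w := by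
        rintro ⟨x, hxs⟩ hx rfl
        exact hx.elim n2 n3
      rcases H1 v x.1 y.1 z hvw (nw x hx') (nw y hy') hzw hx hy hvz
        (fun h => hxy (Subtype.ext h)) with rfl | rfl
      · exact ⟨x.2, hx'⟩
      · exact ⟨y.2, hy'⟩)
  obtain ⟨c, hca, hcb, hwc⟩ := H3 a.1 b.1
  obtain ⟨hcs, hc⟩ := key c hwc.ne'
  rcases he s(⟨w, hws⟩, ⟨c, hcs⟩) hwc with h | h | h
  · have hc1 := p₁.snd_mem_support_of_mem_edges h
    rcases hc.elim (d12 _ hc1) (d13 _ hc1) with h | h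
    · exact hca (h ▸ rfl)
    · exact hcb (h ▸ rfl)
  · exact n2 (p₂.fst_mem_support_of_mem_edges h)
  · exact n3 (p₃.fst_mem_support_of_mem_edges h)

/-- A branch vertex other than the hub has the hub as next vertex on one of the paths. -/
theorem branch_aux {V : Type u} {W : SimpleGraph V} {w : V}
    (H1 : ∀ v x y z, v ≠ w → x ≠ w → y ≠ w → z ≠ w → W.Adj v x → W.Adj v y → W.Adj v z →
      x ≠ y → z = x ∨ z = y)
    {s : Set V} {a b : s} (p₁ p₂ p₃ : (W.induce s).Walk a b)
    (h1 : p₁.IsPath) (h2 : p₂.IsPath)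
    (l1 : 2 ≤ p₁.length) (l2 : 2 ≤ p₂.length) (l3 : 2 ≤ p₃.length)
    (d12 : ∀ v, v ∈ p₁.support → v ∈ p₂.support → v = a ∨ v = b)
    (d13 : ∀ v, v ∈ p₁.support → v ∈ p₃.support → v = a ∨ v = b)
    (d23 : ∀ v, v ∈ p₂.support → v ∈ p₃.support → v = a ∨ v = b)
    (haw : a.1 ≠ w) :
    (p₁.getVert 1).1 = w ∨ (p₂.getVert 1).1 = w ∨ (p₃.getVert 1).1 = w := by
  have ne : ∀ p q : (W.induce s).Walk a b, p.IsPath → 2 ≤ p.length →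
      (∀ v, v ∈ p.support → v ∈ q.support → v = a ∨ v = b) →
      (p.getVert 1).1 ≠ (q.getVert 1).1 := by
    intro p q hp lp hd h
    have h := Subtype.ext h
    have inj := hp.getVert_injOn
    rcases hd _ (p.getVert_mem_support 1) (h ▸ q.getVert_mem_support 1) with h' | h'
    · have := inj (x₁ := 1) (x₂ := 0) (by simp; omega) (by simp) (by simpa using h')
      omega
    · have := inj (x₁ := 1) (x₂ := p.length) (by simp; omega) (by simp) (by simpa using h')
      omega
  have adj : ∀ p : (W.induce s).Walk a b, 2 ≤ p.length → W.Adj a.1 (p.getVert 1).1 := by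
    intro p lp
    have := p.adj_getVert_succ (i := 0) (by omega)
    simpa using this
  by_contra! hcon
  obtain ⟨c1, c2, c3⟩ := hcon
  rcases H1 _ _ _ _ haw c1 c2 c3 (adj p₁ l1) (adj p₂ l2) (adj p₃ l3) (ne p₁ p₂ h1 l1 d12)
    with h | h
  · exact ne p₁ p₃ h1 l1 d13 h.symm
  · exact ne p₂ p₃ h2 l2 d23 h.symm

theorem getVert_one_ne_aux {α : Type*} {G : SimpleGraph α} {a b : α} (p : G.Walk a b)
    (hp : p.IsPath) (lp : 2 ≤ p.length) : p.getVert 1 ≠ b := by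
  intro h
  have := hp.getVert_injOn (x₁ := 1) (x₂ := p.length) (by simp; omega) (by simp)
    (by simpa using h)
  omega

/-- No wheel contains an induced theta. -/
theorem wheel_no_induced_theta {V : Type u} (W : SimpleGraph V) (hW : IsWheel W)
    (s : Set V) : ¬ IsTheta (W.induce s) := by
  obtain ⟨w, n, hn, ⟨e⟩, h3⟩ := hW
  rintro ⟨a, b, p₁, p₂, p₃, hab, h1, h2, h3', l1, l2, l3, d12, d13, d23, -, he⟩
  have H1 : ∀ v x y z, v ≠ w → x ≠ w → y ≠ w → z ≠ w → W.Adj v x → W.Adj v y → W.Adj v z →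
      x ≠ y → z = x ∨ z = y := by
    intro v x y z hv hx hy hz ax ay az hxy
    have key := cycle_nbr_aux hn (v := e ⟨v, hv⟩) (x := e ⟨x, hx⟩) (y := e ⟨y, hy⟩)
      (z := e ⟨z, hz⟩) (e.map_adj_iff.2 ax) (e.map_adj_iff.2 ay) (e.map_adj_iff.2 az)
      (fun h => hxy (congrArg Subtype.val (e.injective h)))
    rcases key with h | h
    · exact Or.inl (congrArg Subtype.val (e.injective h))
    · exact Or.inr (congrArg Subtype.val (e.injective h))
  have H2 : ∀ (S : Set V) (a : V), a ∈ S → a ≠ w →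
      (∀ v ∈ S, v ≠ w → ∀ z, z ≠ w → W.Adj v z → z ∈ S) → ∀ v, v ≠ w → v ∈ S := by
    intro S a haS haw hS v hvw
    obtain ⟨q⟩ := SimpleGraph.cycleGraph_preconnected (e ⟨a, haw⟩) (e ⟨v, hvw⟩)
    have := closed_of_walk_aux (S := {i | (e.symm i).1 ∈ S}) (by
      intro x hx y hxy
      exact hS _ hx (e.symm x).2 _ (e.symm y).2 (e.symm.map_adj_iff.2 hxy)) q
      (by simpa using haS)
    simpa using this
  have H3 : ∀ a b : V, ∃ c, c ≠ a ∧ c ≠ b ∧ W.Adj w c := by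
    intro a b
    by_contra! hcon
    have hsub : W.neighborSet w ⊆ {a, b} := by
      intro c hc
      by_contra hne
      simp only [Set.mem_insert_iff, Set.mem_singleton_iff, not_or] at hne
      exact hcon c hne.1 hne.2 hc
    have := Set.ncard_le_ncard hsub (by simp)
    have h4 := Set.ncard_insert_le a {b}
    rw [Set.ncard_singleton] at h4
    omega
  by_cases haw : a.1 = w
  · have hbw : b.1 ≠ w := fun h => hab (Subtype.ext (haw.trans h.symm))
    have key := branch_aux H1 p₁.reverse p₂.reverse p₃.reverse h1.reverse h2.reverse
      (by simpa) (by simpa) (by simpa)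
      (fun v hv hv' => (d12 v (by simpa using hv) (by simpa using hv')).symm)
      (fun v hv hv' => (d13 v (by simpa using hv) (by simpa using hv')).symm)
      (fun v hv hv' => (d23 v (by simpa using hv) (by simpa using hv')).symm) hbw
    subst haw
    rcases key with h | h | h
    · exact getVert_one_ne_aux _ h1.reverse (by simpa) (Subtype.ext h)
    · exact getVert_one_ne_aux _ h2.reverse (by simpa) (Subtype.ext h)
    · exact getVert_one_ne_aux _ h3'.reverse (by simpa) (Subtype.ext h)
  have key := branch_aux H1 p₁ p₂ p₃ h1 h2 l1 l2 l3 d12 d13 d23 haw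
  by_cases hbw : b.1 = w
  · subst hbw
    rcases key with h | h | h
    · exact getVert_one_ne_aux _ h1 l1 (Subtype.ext h)
    · exact getVert_one_ne_aux _ h2 l2 (Subtype.ext h)
    · exact getVert_one_ne_aux _ h3' l3 (Subtype.ext h)
  have mem : ∀ p : (W.induce s).Walk a b, (p.getVert 1).1 = w →
      ∃ hws : w ∈ s, (⟨w, hws⟩ : s) ∈ p.support := by
    rintro p rfl
    exact ⟨(p.getVert 1).2, p.getVert_mem_support 1⟩
  rcases key with h | h | h
  · obtain ⟨hws, hw⟩ := mem _ h
    exact core_aux H1 H2 H3 p₁ p₂ p₃ hab h2 h3' l2 l3 d12 d13 d23 he haw hbw hws hw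
  · obtain ⟨hws, hw⟩ := mem _ h
    exact core_aux H1 H2 H3 p₂ p₁ p₃ hab h1 h3' l1 l3 (fun v x y => d12 v y x) d23 d13
      (fun e h => by have := he e h; tauto) haw hbw hws hw
  · obtain ⟨hws, hw⟩ := mem _ h
    exact core_aux H1 H2 H3 p₃ p₁ p₂ hab h1 h2 l1 l2 (fun v x y => d13 v y x)
      (fun v x y => d23 v y x) d12
      (fun e h => by have := he e h; tauto) haw hbw hws hw
end

section
/- For every positive integer k, in any proper colouring of the graph G_k (with any number of colours), there is a vertex t ∈ T_k whose neighbourhood contains vertices of at least k distinct colours; consequently, G_k has chromatic number at least k+1. -/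
universe u

theorem nextGraft_finite (P : GraftData) (h : Finite P.V) : Finite (nextGraft P).V := by
  unfold nextGraft
  infer_instance

theorem nextGraft_stable (P : GraftData) (h : ∀ u ∈ P.T, ∀ v ∈ P.T, ¬ P.G.Adj u v) :
    ∀ u ∈ (nextGraft P).T, ∀ v ∈ (nextGraft P).T, ¬ (nextGraft P).G.Adj u v := by
  have key : ∀ a b : (nextGraft P).V, a ∈ (nextGraft P).T → b ∈ (nextGraft P).T →
      (nextGraft P).G.Adj a b → False := by
    intro a b ha hb hab
    obtain ⟨_, h1 | h1⟩ := hab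
    all_goals
      rcases h1 with ⟨x, y, rfl, rfl, hxy⟩ | ⟨x, u, w, rfl, rfl, hxy⟩ | ⟨u, x, rfl, rfl, hxy⟩ |
        ⟨u, w, v, x, rfl, rfl, _, hxy⟩ | ⟨u, w, v, rfl, rfl, _⟩ | ⟨u, x, y, rfl, rfl, hxy⟩ |
        ⟨u, x, v, rfl, rfl, hxy⟩ <;>
      rcases ha with ⟨a', ha, ea⟩ | ⟨ca, ea⟩ <;> rcases hb with ⟨b', hb, eb⟩ | ⟨cb, eb⟩ <;>
      cases ea <;> cases eb
    · exact h _ ha _ hb hxy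
    · exact h _ u.2 _ ha hxy
    · exact h _ hb _ ha hxy
    · exact h _ u.2 _ hb hxy
  exact fun a ha b hb hab => key a b ha hb hab

open Classical in
theorem nextGraft_col (P : GraftData) (hf : Finite P.V)
    (h : ∀ u ∈ P.T, ∀ v ∈ P.T, ¬ P.G.Adj u v) (k : ℕ) (α : Type)
    (ih : ∀ (C : P.G.Coloring α), ∃ t ∈ P.T, k ≤ (⇑C '' (P.G.neighborSet t)).ncard)
    (C : (nextGraft P).G.Coloring α) :
    ∃ t ∈ (nextGraft P).T, k + 1 ≤ (⇑C '' ((nextGraft P).G.neighborSet t)).ncard := by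
  have hfin := nextGraft_finite P hf
  let C₁ : P.G.Coloring α := SimpleGraph.Coloring.mk (fun x => C (Sum.inl x)) (by
    intro x y hxy
    apply C.valid
    simp only [nextGraft, SimpleGraph.fromRel_adj]
    exact ⟨by simpa using hxy.ne, Or.inl (Or.inl ⟨x, y, rfl, rfl, hxy⟩)⟩)
  obtain ⟨u, hu, hA⟩ := ih C₁
  let f : P.V → (nextGraft P).V := fun x =>
    if hx : x ∈ P.T then Sum.inr (Sum.inr (⟨u, hu⟩, Sum.inr ⟨x, hx⟩))
    else Sum.inr (Sum.inr (⟨u, hu⟩, Sum.inl ⟨x, hx⟩))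
  have hfT : ∀ x (hx : x ∈ P.T), f x = Sum.inr (Sum.inr (⟨u, hu⟩, Sum.inr ⟨x, hx⟩)) :=
    fun x hx => dif_pos hx
  have hfN : ∀ x (hx : x ∉ P.T), f x = Sum.inr (Sum.inr (⟨u, hu⟩, Sum.inl ⟨x, hx⟩)) :=
    fun x hx => dif_neg hx
  have key : ∀ x y, P.G.Adj x y → y ∉ P.T → (nextGraft P).G.Adj (f y) (f x) := by
    intro x y hxy hy
    by_cases hx : x ∈ P.T
    · rw [hfT x hx, hfN y hy]
      simp only [nextGraft, SimpleGraph.fromRel_adj]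
      exact ⟨by simp, Or.inl (by
        iterate 6 right
        exact ⟨_, _, _, rfl, rfl, hxy⟩)⟩
    · rw [hfN x hx, hfN y hy]
      simp only [nextGraft, SimpleGraph.fromRel_adj]
      exact ⟨by simpa using hxy.ne', Or.inl (by
        iterate 5 right
        left
        exact ⟨_, _, _, rfl, rfl, hxy.symm⟩)⟩
  let C₂ : P.G.Coloring α := SimpleGraph.Coloring.mk (fun x => C (f x)) (by
    intro x y hxy
    by_cases hy : y ∈ P.T
    · have hx : x ∉ P.T := fun hx => h x hx y hy hxy
      exact C.valid (key y x hxy.symm hx)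
    · exact (C.valid (key x y hxy hy)).symm)
  obtain ⟨v, hv, hB⟩ := ih C₂
  set A := ⇑C₁ '' P.G.neighborSet u with hAdef
  set B := ⇑C₂ '' P.G.neighborSet v with hBdef
  have hAf : A.Finite := (Set.toFinite _).image _
  have hBf : B.Finite := (Set.toFinite _).image _
  -- adjacency of clones to `N(u)`
  have hcl : ∀ w : {w : ↥P.T ⊕ ↥P.T // w ≠ Sum.inl ⟨u, hu⟩}, 
      A ⊆ ⇑C '' ((nextGraft P).G.neighborSet (Sum.inr (Sum.inl ⟨⟨u, hu⟩, w⟩))) := by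
    rintro w _ ⟨x, hx, rfl⟩
    refine ⟨Sum.inl x, ?_, rfl⟩
    simp only [nextGraft, SimpleGraph.mem_neighborSet, SimpleGraph.fromRel_adj]
    exact ⟨by simp, Or.inr (Or.inr (Or.inl ⟨_, _, _, rfl, rfl, hx⟩))⟩
  by_cases hAB : k + 1 ≤ (A ∪ B).ncard
  · by_cases huv : v = u
    · subst huv
      refine ⟨Sum.inl v, Or.inl ⟨v, hv, rfl⟩, hAB.trans (Set.ncard_le_ncard ?_ ((Set.toFinite _).image _))⟩
      rintro _ (⟨x, hx, rfl⟩ | ⟨x, hx, rfl⟩)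
      · refine ⟨Sum.inl x, ?_, rfl⟩
        simp only [nextGraft, SimpleGraph.mem_neighborSet, SimpleGraph.fromRel_adj]
        have : P.G.Adj v x := hx
        exact ⟨by simpa using this.ne, Or.inl (Or.inl ⟨_, _, rfl, rfl, hx⟩)⟩
      · refine ⟨f x, ?_, rfl⟩
        rw [hfN x (fun h' => h v hv x h' hx)]
        simp only [nextGraft, SimpleGraph.mem_neighborSet, SimpleGraph.fromRel_adj]
        exact ⟨by simp, Or.inl (Or.inr (Or.inr (Or.inl ⟨⟨v, hv⟩, _, rfl, rfl, hx⟩)))⟩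
    · refine ⟨Sum.inr (Sum.inl ⟨⟨u, hu⟩, ⟨Sum.inl ⟨v, hv⟩, by simpa using huv⟩⟩), Or.inr ⟨_, rfl⟩,
        hAB.trans (Set.ncard_le_ncard ?_ ((Set.toFinite _).image _))⟩
      refine Set.union_subset (hcl _) ?_
      rintro _ ⟨x, hx, rfl⟩
      refine ⟨f x, ?_, rfl⟩
      rw [hfN x (fun h' => h v hv x h' hx)]
      simp only [nextGraft, SimpleGraph.mem_neighborSet, SimpleGraph.fromRel_adj]
      exact ⟨by simp, Or.inl (Or.inr (Or.inr (Or.inr (Or.inl ⟨_, _, ⟨v, hv⟩, _, rfl, rfl, rfl, hx⟩))))⟩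
  · have e1 : A = A ∪ B := Set.eq_of_subset_of_ncard_le Set.subset_union_left (by omega) (hAf.union hBf)
    have e2 : B = A ∪ B := Set.eq_of_subset_of_ncard_le Set.subset_union_right (by omega) (hAf.union hBf)
    have e : A = B := e1.trans e2.symm
    have hc : C₂ v ∉ A := by
      rw [e]
      rintro ⟨x, hx, hxv⟩
      exact C₂.valid hx hxv.symm
    refine ⟨Sum.inr (Sum.inl ⟨⟨u, hu⟩, ⟨Sum.inr ⟨v, hv⟩, by simp⟩⟩), Or.inr ⟨_, rfl⟩, ?_⟩
    have h1 : k + 1 ≤ (insert (C₂ v) A).ncard := by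
      rw [Set.ncard_insert_of_notMem hc hAf]; omega
    refine h1.trans (Set.ncard_le_ncard ?_ ((Set.toFinite _).image _))
    refine Set.insert_subset ?_ (hcl _)
    refine ⟨f v, ?_, rfl⟩
    rw [hfT v hv]
    simp only [nextGraft, SimpleGraph.mem_neighborSet, SimpleGraph.fromRel_adj]
    exact ⟨by simp, Or.inl (Or.inr (Or.inr (Or.inr (Or.inr (Or.inl ⟨_, _, ⟨v, hv⟩, rfl, rfl, rfl⟩)))))⟩

theorem burlingGraft_all (k : ℕ) : Finite (BurlingGraft k).V ∧
    (∀ u ∈ (BurlingGraft k).T, ∀ v ∈ (BurlingGraft k).T, ¬ (BurlingGraft k).G.Adj u v) ∧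
    (∀ (α : Type) (C : (BurlingGraft k).G.Coloring α),
      ∃ t ∈ (BurlingGraft k).T,
        k + 1 ≤ (⇑C '' ((BurlingGraft k).G.neighborSet t)).ncard) := by
  induction k with
  | zero =>
    refine ⟨inferInstanceAs (Finite Bool), ?_, ?_⟩
    · rintro u rfl v rfl h
      exact h.ne rfl
    · intro α C
      refine ⟨true, rfl, ?_⟩
      have hfin : Finite (BurlingGraft 0).V := inferInstanceAs (Finite Bool)
      rw [zero_add, Nat.one_le_iff_ne_zero, ← Nat.pos_iff_ne_zero, Set.ncard_pos ((Set.toFinite _).image _)]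
      refine ⟨_, false, ?_, rfl⟩
      show (⊤ : SimpleGraph Bool).Adj true false
      simp
  | succ k ih =>
    obtain ⟨h1, h2, h3⟩ := ih
    exact ⟨nextGraft_finite _ h1, nextGraft_stable _ h2,
      fun α C => nextGraft_col _ h1 h2 (k + 1) α (h3 α) C⟩

/-- For every positive integer `k`, any proper colouring of `G_k` gives at least `k` colours
to the neighbourhood of some vertex of `T_k`; consequently `G_k` has chromatic number at
least `k + 1`. -/
theorem burlingGraft_chromatic (k : ℕ) (hk : 0 < k) :
    (∀ (α : Type) (C : (BurlingGraft (k - 1)).G.Coloring α),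
      ∃ t ∈ (BurlingGraft (k - 1)).T,
        k ≤ (⇑C '' ((BurlingGraft (k - 1)).G.neighborSet t)).ncard) ∧
    (k : ℕ∞) + 1 ≤ (BurlingGraft (k - 1)).G.chromaticNumber := by
  obtain ⟨m, rfl⟩ : ∃ m, k = m + 1 := ⟨k - 1, by omega⟩
  obtain ⟨_, _, h3⟩ := burlingGraft_all m
  refine ⟨h3, ?_⟩
  change ((m + 1 : ℕ) : ℕ∞) + 1 ≤ (BurlingGraft m).G.chromaticNumber
  rw [SimpleGraph.chromaticNumber]
  refine le_iInf₂ ?_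
  intro n hn
  obtain ⟨C⟩ := hn
  obtain ⟨t, -, ht⟩ := h3 _ C
  have hc : C t ∉ ⇑C '' ((BurlingGraft m).G.neighborSet t) := by
    rintro ⟨x, hx, hxv⟩
    exact C.valid hx hxv.symm
  have h1 := Set.ncard_insert_of_notMem hc (Set.toFinite _)
  have h2 := Set.ncard_le_card (insert (C t) (⇑C '' ((BurlingGraft m).G.neighborSet t)))
  simp only [Nat.card_eq_fintype_card, Fintype.card_fin] at h2
  have : m + 1 + 1 ≤ n := by omega
  exact_mod_cast this
end
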